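/- Let G be a nontrivial finite 2-group of derived length d. Then exp M(G) divides 2^(d-1)·(exp G)^d. -/

import Mathlib

/-!
Write `e = exp G`. A cocycle `α` gives a central extension `1 → ℂˣ → Γ → G → 1`. If `c ^ n = 1` for
every `c` in the intersection of `ℂˣ` with the commutator subgroup `Γ'`, then `c ↦ c ^ n` factors
through the image of `ℂˣ` in the abelianization of `Γ`, and extends to a homomorphism `Γ → ℂˣ`
because `ℂˣ` is divisible; evaluated on a section of `Γ → G` this exhibits `α ^ n` as a coboundary
(`pow_mem_B2`).

It remains to bound the exponent of `A ∩ Γ'` for a central divisible subgroup `A ≤ Γ` such that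
`Γ / A` has exponent dividing `e` and `Γ^(d+1) ≤ A` (`pow_eq_one_of_mem_commutator`), by induction
on `d`. If `d = 0`, then `Γ` has class at most two and `⁅x, y⁆ ^ e = ⁅x ^ e, y⁆ = 1`. Otherwise
`M = A Γ^(d)` has class at most two, and the formula
`(x y) ^ m = ⁅y, x⁆ ^ (m choose 2) x ^ m y ^ m` with `m = 2 e` shows that the elements of `M` killed
by `2 e` form a normal subgroup `U` of `Γ`. Divisibility of `A` gives `M = A U`, so `Γ / U` has
derived length one less modulo the image of `A`, and passing from `Γ / U` to `Γ` costs a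
factor `2 e`.
-/

def IsCocycle {G : Type*} [Group G] (α : G → G → ℂˣ) : Prop :=
  ∀ x y z : G, α x y * α (x * y) z = α x (y * z) * α y z

/-- The group of 2-cocycles on `G` with values in `ℂˣ` (trivial action). -/
def Z2 (G : Type*) [Group G] : Subgroup (G → G → ℂˣ) where
  carrier := {α | IsCocycle α}
  one_mem' := by intro x y z; simp
  mul_mem' := by
    intro a b ha hb x y z
    simp only [Pi.mul_apply]
    rw [mul_mul_mul_comm, ha x y z, hb x y z, mul_mul_mul_comm]
  inv_mem' := by
    intro a ha x y z
    simp only [Pi.inv_apply]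
    rw [← mul_inv, ha x y z, mul_inv]

/-- The group of 2-coboundaries on `G` with values in `ℂˣ`. -/
def B2 (G : Type*) [Group G] : Subgroup (G → G → ℂˣ) where
  carrier := {α | ∃ ζ : G → ℂˣ, ∀ x y : G, α x y = ζ x * ζ y * (ζ (x * y))⁻¹}
  one_mem' := ⟨1, by simp⟩
  mul_mem' := by
    rintro a b ⟨ζ, hζ⟩ ⟨ξ, hξ⟩
    refine ⟨ζ * ξ, fun x y => ?_⟩
    simp only [Pi.mul_apply, hζ x y, hξ x y, mul_inv]
    simp only [mul_comm, mul_left_comm, mul_assoc]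
  inv_mem' := by
    rintro a ⟨ζ, hζ⟩
    refine ⟨ζ⁻¹, fun x y => ?_⟩
    simp only [Pi.inv_apply, hζ x y, mul_inv, inv_inv]

/-- The Schur multiplier `M(G) = Z²(G)/B²(G)`. -/
abbrev SchurM (G : Type*) [Group G] := ↥(Z2 G) ⧸ (B2 G).subgroupOf (Z2 G)

open scoped commutatorElement

/-! ### Central extensions and the derived series -/

section GroupTheory

variable {Γ : Type*} [Group Γ]

theorem pow_mul_eq_of_central {x y c : Γ} (hc : ∀ z, c * z = z * c) (hyx : y * x = c * (x * y))
    (n : ℕ) : y ^ n * x = c ^ n * (x * y ^ n) := by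
  induction n with
  | zero => simp
  | succ n ih =>
    rw [pow_succ, mul_assoc, hyx, ← mul_assoc, ← hc, mul_assoc, ← mul_assoc (y ^ n), ih, pow_succ']
    simp only [mul_assoc]

theorem mul_pow_eq_of_central {x y c : Γ} (hc : ∀ z, c * z = z * c) (hyx : y * x = c * (x * y))
    (n : ℕ) : (x * y) ^ n = c ^ (n.choose 2) * (x ^ n * y ^ n) := by
  have hcn : ∀ (k : ℕ) (z : Γ), c ^ k * z = z * c ^ k := fun k z =>
    (Commute.pow_left (hc z) k)
  induction n with
  | zero => simp
  | succ n ih =>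
    have h1 : y ^ n * (x * y) = c ^ n * (x * y ^ (n + 1)) := by
      rw [← mul_assoc, pow_mul_eq_of_central hc hyx, pow_succ]
      simp only [mul_assoc]
    have h2 : (n + 1).choose 2 = n.choose 2 + n := by
      rw [Nat.choose_succ_succ' n 1, Nat.choose_one_right, add_comm]
    rw [pow_succ, ih, h2, pow_add, pow_succ x, mul_assoc, mul_assoc, h1, ← mul_assoc (x ^ n),
      ← hcn n (x ^ n)]
    simp only [mul_assoc]

/-- If `⁅y, x⁆` and `y ^ e` are central, then `⁅y, x⁆ ^ e = ⁅y ^ e, x⁆ = 1`. -/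
theorem commutator_pow_eq_one {x y : Γ} {e : ℕ} (hc : ⁅y, x⁆ ∈ Subgroup.center Γ)
    (hy : y ^ e ∈ Subgroup.center Γ) : ⁅y, x⁆ ^ e = 1 := by
  have h := pow_mul_eq_of_central (x := x) (y := y) (c := ⁅y, x⁆)
    (fun z => (Subgroup.mem_center_iff.1 hc z).symm) (by simp [commutatorElement_def, mul_assoc]) e
  rw [← Subgroup.mem_center_iff.1 hy x] at h
  exact mul_eq_right.1 h.symm

theorem mul_pow_two_mul {x y : Γ} {e : ℕ} (hc : ⁅y, x⁆ ∈ Subgroup.center Γ)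
    (hy : y ^ e ∈ Subgroup.center Γ) : (x * y) ^ (2 * e) = x ^ (2 * e) * y ^ (2 * e) := by
  rw [mul_pow_eq_of_central (c := ⁅y, x⁆)
    (fun z => (Subgroup.mem_center_iff.1 hc z).symm) (by simp [commutatorElement_def, mul_assoc])]
  have h2 : (2 * e).choose 2 = e * (2 * e - 1) := by
    rw [Nat.choose_two_right, mul_assoc, Nat.mul_div_cancel_left _ two_pos]
  rw [h2, pow_mul, commutator_pow_eq_one hc hy, one_pow, one_mul]

end GroupTheory

/-- The bound on the exponent of `A ∩ Γ'` when `Γ` has derived length at most `d + 1` modulo the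
central subgroup `A`. -/
theorem pow_eq_one_of_mem_commutator (e d : ℕ) : ∀ (Γ : Type*) [Group Γ] (A : Subgroup Γ),
    A ≤ Subgroup.center Γ → (∀ a ∈ A, ∃ b ∈ A, b ^ e = a) → (∀ g : Γ, g ^ e ∈ A) →
    derivedSeries Γ (d + 1) ≤ A →
    ∀ a ∈ A, a ∈ commutator Γ → a ^ (2 ^ d * e ^ (d + 1)) = 1 := by
  induction d with
  | zero =>
    intro Γ _ A hA _ he hd a _ ha
    let K : Subgroup Γ :=
      { carrier := {x | x ∈ A ∧ x ^ e = 1}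
        one_mem' := ⟨A.one_mem, one_pow _⟩
        mul_mem' := by
          rintro x y ⟨hx, hx'⟩ ⟨hy, hy'⟩
          refine ⟨A.mul_mem hx hy, ?_⟩
          have : Commute x y := (Subgroup.mem_center_iff.1 (hA hx) y).symm
          rw [this.mul_pow, hx', hy', one_mul]
        inv_mem' := by
          rintro x ⟨hx, hx'⟩
          exact ⟨A.inv_mem hx, by rw [inv_pow, hx', inv_one]⟩ }
    have hK : commutator Γ ≤ K := by
      rw [commutator_def, Subgroup.commutator_le]
      intro x _ y _
      have hxy : ⁅x, y⁆ ∈ A := hd (by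
        rw [zero_add, derivedSeries_one]
        exact Subgroup.commutator_mem_commutator (Subgroup.mem_top x) (Subgroup.mem_top y))
      exact ⟨hxy, commutator_pow_eq_one (hA hxy) (hA (he x))⟩
    simpa using (hK ha).2
  | succ d ih =>
    intro Γ _ A hA hdiv he hd a haA ha
    have hAn : A.Normal := ⟨fun n hn g => by
      rw [Subgroup.mem_center_iff.1 (hA hn) g, mul_inv_cancel_right]; exact hn⟩
    set M : Subgroup Γ := A ⊔ derivedSeries Γ (d + 1)
    have hMc : ∀ x ∈ M, ∀ y ∈ M, ⁅x, y⁆ ∈ A := by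
      intro x hx y hy
      obtain ⟨a, ha, x', hx', rfl⟩ := Subgroup.mem_sup_of_normal_left.1 hx
      obtain ⟨b, hb, y', hy', rfl⟩ := Subgroup.mem_sup_of_normal_left.1 hy
      have ha' : ∀ z, z * a = a * z := Subgroup.mem_center_iff.1 (hA ha)
      have hb' : ∀ z, z * b = b * z := Subgroup.mem_center_iff.1 (hA hb)
      have : ⁅a * x', b * y'⁆ = ⁅x', y'⁆ := by
        have h1 : (a * x') * (b * y') = (a * b) * (x' * y') := by
          rw [mul_assoc, ← mul_assoc x', hb' x']; simp only [mul_assoc]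
        have h2 : (b * y') * (a * x') = (a * b) * (y' * x') := by
          rw [mul_assoc, ← mul_assoc y', ha' y', ← mul_assoc, ← mul_assoc b, ha' b]
          simp only [mul_assoc]
        have key : ∀ u v : Γ, ⁅u, v⁆ = (u * v) * (v * u)⁻¹ := fun u v => by
          simp [commutatorElement_def, mul_assoc]
        have hab : ∀ z, z * (a * b) = (a * b) * z := fun z => by
          rw [← mul_assoc, ha', mul_assoc, hb', mul_assoc]
        rw [key, h1, h2, key, ← hab, ← hab]
        group
      rw [this]
      exact hd (by
        rw [derivedSeries_succ]
        exact Subgroup.commutator_mem_commutator hx' hy')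
    let U : Subgroup Γ :=
      { carrier := {x | x ∈ M ∧ x ^ (2 * e) = 1}
        one_mem' := ⟨M.one_mem, one_pow _⟩
        mul_mem' := by
          rintro x y ⟨hx, hx'⟩ ⟨hy, hy'⟩
          exact ⟨M.mul_mem hx hy, by
            rw [mul_pow_two_mul (hA (hMc y hy x hx)) (hA (he y)), hx', hy', one_mul]⟩
        inv_mem' := by
          rintro x ⟨hx, hx'⟩
          exact ⟨M.inv_mem hx, by rw [inv_pow, hx', inv_one]⟩ }
    have hU : U.Normal := ⟨by
      rintro n ⟨hn, hn'⟩ g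
      exact ⟨(inferInstance : M.Normal).conj_mem n hn g, by
        rw [conj_pow, hn', mul_one, mul_inv_cancel]⟩⟩
    have hsurj : Function.Surjective (QuotientGroup.mk' U) := QuotientGroup.mk'_surjective U
    have key := ih (Γ ⧸ U) (A.map (QuotientGroup.mk' U)) ?_ ?_ ?_ ?_ (QuotientGroup.mk' U a)
      (Subgroup.mem_map_of_mem _ haA) ?_
    · rw [← map_pow, QuotientGroup.mk'_apply, QuotientGroup.eq_one_iff] at key
      have h := key.2
      rw [← pow_mul] at h
      rw [← h]
      congr 1
      ring
    · rintro _ ⟨b, hb, rfl⟩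
      rw [Subgroup.mem_center_iff]
      intro g
      obtain ⟨g, rfl⟩ := hsurj g
      rw [← map_mul, ← map_mul, Subgroup.mem_center_iff.1 (hA hb) g]
    · rintro _ ⟨b, hb, rfl⟩
      obtain ⟨c, hc, rfl⟩ := hdiv b hb
      exact ⟨_, Subgroup.mem_map_of_mem _ hc, (map_pow _ _ _).symm⟩
    · intro g
      obtain ⟨g, rfl⟩ := hsurj g
      rw [← map_pow]
      exact Subgroup.mem_map_of_mem _ (he g)
    · rw [← map_derivedSeries_eq hsurj]
      rintro _ ⟨x, hx, rfl⟩
      -- Dividing `x` by an `e`-th root in `A` of `x ^ e` lands in `U`.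
      obtain ⟨b, hb, hbx⟩ := hdiv _ (he x)
      refine ⟨b, hb, ?_⟩
      rw [QuotientGroup.mk'_apply, QuotientGroup.mk'_apply, QuotientGroup.eq]
      refine ⟨M.mul_mem (M.inv_mem (le_sup_left (b := derivedSeries Γ (d + 1)) hb))
        (le_sup_right (a := A) hx), ?_⟩
      have hcomm : Commute b⁻¹ x :=
        Commute.inv_left (Subgroup.mem_center_iff.1 (hA hb) x).symm
      rw [hcomm.mul_pow, mul_comm 2 e, pow_mul, pow_mul, inv_pow, hbx, inv_pow,
        inv_mul_cancel]
    · have h := Subgroup.mem_map_of_mem (QuotientGroup.mk' U) ha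
      rwa [← derivedSeries_one, map_derivedSeries_eq hsurj, derivedSeries_one] at h

/-! ### Homomorphisms into `ℂˣ` -/

theorem units_complex_exists_pow_eq (n : ℕ) (hn : n ≠ 0) (a : ℂˣ) : ∃ b : ℂˣ, b ^ n = a := by
  obtain ⟨z, hz⟩ := IsAlgClosed.exists_pow_nat_eq (a : ℂ) (Nat.pos_of_ne_zero hn)
  have hz0 : z ≠ 0 := by
    rintro rfl
    rw [zero_pow hn] at hz
    exact a.ne_zero hz.symm
  exact ⟨Units.mk0 z hz0, Units.ext (by simpa using hz)⟩

/-- Injectivity of the divisible group `ℂˣ`: a homomorphism killing the kernel of `f` extends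
along `f`. -/
theorem exists_extension_units_complex {B C : Type*} [CommGroup B] [CommGroup C] (f : B →* C)
    (g : B →* ℂˣ) (h : f.ker ≤ g.ker) : ∃ χ : C →* ℂˣ, ∀ b, χ (f b) = g b := by
  let iN : DivisibleBy (Additive ℂˣ) ℕ := divisibleByOfSMulRightSurj _ _ fun {n} hn a => by
    obtain ⟨b, hb⟩ := units_complex_exists_pow_eq n hn a.toMul
    exact ⟨Additive.ofMul b, congrArg Additive.ofMul hb⟩
  let iZ : DivisibleBy (Additive ℂˣ) ℤ := AddGroup.divisibleByIntOfDivisibleByNat _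
  obtain ⟨k, hk⟩ := (Module.Baer.of_divisible (Additive ℂˣ)).extension_property_addMonoidHom
    (QuotientGroup.kerLift f).toAdditive (QuotientGroup.kerLift_injective f)
    (QuotientGroup.lift f.ker g h).toAdditive
  exact ⟨MonoidHom.toAdditive.symm k, fun b =>
    DFunLike.congr_fun hk (Additive.ofMul (b : B ⧸ f.ker))⟩

/-! ### The central extension attached to a cocycle -/

/-- The underlying set `ℂˣ × G` of the central extension of `G` by `ℂˣ` attached to `α`. The cocycle
need not be normalized, so the identity is `(α 1 1)⁻¹` over `1`. -/
@[ext]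
structure CocycleExt {G : Type*} [Group G] (α : G → G → ℂˣ) where
  /-- The coefficient in `ℂˣ`. -/
  coeff : ℂˣ
  /-- The image in `G`. -/
  base : G

namespace CocycleExt

variable {G : Type*} [Group G] {α : G → G → ℂˣ}

theorem cocycle_one_left (hα : IsCocycle α) (y : G) : α 1 y = α 1 1 := by
  have h := hα 1 1 y
  simp only [one_mul] at h
  exact (mul_right_cancel h).symm

theorem cocycle_one_right (hα : IsCocycle α) (y : G) : α y 1 = α 1 1 := by
  have h := hα y 1 1
  simp only [mul_one] at h
  exact mul_left_cancel h

instance : Mul (CocycleExt α) := ⟨fun p q => ⟨p.coeff * q.coeff * α p.base q.base, p.base * q.base⟩⟩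

instance : One (CocycleExt α) := ⟨⟨(α 1 1)⁻¹, 1⟩⟩

instance : Inv (CocycleExt α) :=
  ⟨fun p => ⟨(α 1 1)⁻¹ * p.coeff⁻¹ * (α p.base⁻¹ p.base)⁻¹, p.base⁻¹⟩⟩

@[simp] theorem mul_coeff (p q : CocycleExt α) :
    (p * q).coeff = p.coeff * q.coeff * α p.base q.base := rfl
@[simp] theorem mul_base (p q : CocycleExt α) : (p * q).base = p.base * q.base := rfl
@[simp] theorem one_coeff : (1 : CocycleExt α).coeff = (α 1 1)⁻¹ := rfl
@[simp] theorem one_base : (1 : CocycleExt α).base = 1 := rfl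
@[simp] theorem inv_coeff (p : CocycleExt α) :
    p⁻¹.coeff = (α 1 1)⁻¹ * p.coeff⁻¹ * (α p.base⁻¹ p.base)⁻¹ := rfl
@[simp] theorem inv_base (p : CocycleExt α) : p⁻¹.base = p.base⁻¹ := rfl

/-- The group law `(a, x) (b, y) = (a b α(x, y), x y)`. -/
abbrev group (hα : IsCocycle α) : Group (CocycleExt α) :=
  Group.ofLeftAxioms
    (by
      intro p q r
      ext1
      · simp only [mul_coeff, mul_base]
        have h := hα p.base q.base r.base
        calc _ = p.coeff * q.coeff * r.coeff * (α p.base q.base * α (p.base * q.base) r.base) := by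
              simp only [mul_comm, mul_left_comm]
          _ = _ := by rw [h]; simp only [mul_comm, mul_left_comm]
      · simp [mul_assoc])
    (by
      intro p
      ext1
      · simp [cocycle_one_left hα p.base, mul_comm, mul_left_comm]
      · simp)
    (by
      intro p
      ext1
      · simp [mul_comm, mul_left_comm]
      · simp)

end CocycleExt

open CocycleExt in
/-- The bound for the central extension translates into a bound on the order of the class of `α`. -/
theorem pow_mem_B2 {G : Type*} [Group G] (α : G → G → ℂˣ) (hα : IsCocycle α) (e d : ℕ)
    (he0 : e ≠ 0) (he : ∀ g : G, g ^ e = 1) (hd : derivedSeries G (d + 1) = ⊥) :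
    α ^ (2 ^ d * e ^ (d + 1)) ∈ B2 G := by
  let _ : Group (CocycleExt α) := CocycleExt.group hα
  let π : CocycleExt α →* G := ⟨⟨CocycleExt.base, rfl⟩, fun _ _ => rfl⟩
  let ι : ℂˣ →* CocycleExt α :=
    { toFun := fun a => ⟨a * (α 1 1)⁻¹, 1⟩
      map_one' := by ext1 <;> simp
      map_mul' := fun a b => by ext1 <;> simp [mul_comm, mul_left_comm, mul_assoc] }
  have hι_mul : ∀ (a : ℂˣ) (p : CocycleExt α), ι a * p = ⟨a * p.coeff, p.base⟩ := by
    intro a p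
    ext1
    · simp [ι, cocycle_one_left hα p.base, mul_comm, mul_left_comm]
    · simp [ι]
  have hmul_ι : ∀ (a : ℂˣ) (p : CocycleExt α), p * ι a = ⟨a * p.coeff, p.base⟩ := by
    intro a p
    ext1
    · simp [ι, cocycle_one_right hα p.base, mul_comm, mul_left_comm]
    · simp [ι]
  have hker : ∀ p : CocycleExt α, π p = 1 → p ∈ ι.range := by
    intro p hp
    refine ⟨p.coeff * α 1 1, ?_⟩
    ext1
    · simp [ι]
    · exact hp.symm
  have hinj : Function.Injective ι := fun a b hab =>
    mul_right_cancel (congrArg CocycleExt.coeff hab)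
  have hbound := pow_eq_one_of_mem_commutator e d (CocycleExt α) ι.range
    (by
      rintro _ ⟨a, rfl⟩
      rw [Subgroup.mem_center_iff]
      intro p
      rw [hι_mul, hmul_ι])
    (by
      rintro _ ⟨a, rfl⟩
      obtain ⟨b, rfl⟩ := units_complex_exists_pow_eq e he0 a
      exact ⟨ι b, ⟨b, rfl⟩, (map_pow _ _ _).symm⟩)
    (fun g => hker _ (by rw [map_pow, he]))
    (fun x hx => hker _ (by
      have := map_derivedSeries_le_derivedSeries π (d + 1) (Subgroup.mem_map_of_mem π hx)
      rwa [hd, Subgroup.mem_bot] at this))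
  obtain ⟨χ, hχ⟩ := exists_extension_units_complex
    ((Abelianization.of (G := CocycleExt α)).comp ι) (powMonoidHom (2 ^ d * e ^ (d + 1))) (by
      intro a ha
      rw [MonoidHom.mem_ker, MonoidHom.comp_apply, ← MonoidHom.mem_ker,
        Abelianization.ker_of] at ha
      have h := hbound (ι a) ⟨a, rfl⟩ ha
      rw [← map_pow] at h
      exact hinj (h.trans (map_one ι).symm))
  refine ⟨fun x => χ (Abelianization.of (⟨1, x⟩ : CocycleExt α)), fun x y => ?_⟩
  have hxy : (⟨1, x⟩ : CocycleExt α) * ⟨1, y⟩ = ι (α x y) * ⟨1, x * y⟩ := by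
    rw [hι_mul]
    ext1 <;> simp
  have h := hχ (α x y)
  rw [MonoidHom.comp_apply, powMonoidHom_apply] at h
  rw [← map_mul, ← map_mul, hxy, map_mul, map_mul, h, mul_inv_cancel_right]
  rfl

/-- Let `G` be a nontrivial finite `2`-group of derived length `d`.
Then `exp M(G)` divides `2^(d-1) · (exp G)^d`. -/
theorem exponent_schurMultiplier_dvd_pow_derivedLength_two
    (G : Type*) [Group G] [Finite G] [Nontrivial G] (hG : IsPGroup 2 G)
    (d : ℕ) (hd : derivedSeries G d = ⊥) (hmin : ∀ e < d, derivedSeries G e ≠ ⊥) :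
    Monoid.exponent (SchurM G) ∣ 2 ^ (d - 1) * (Monoid.exponent G) ^ d := by
  obtain _ | d := d
  -- Derived length zero would make `G` trivial.
  · rw [derivedSeries_zero] at hd
    exact absurd hd top_ne_bot
  refine Monoid.exponent_dvd_of_forall_pow_eq_one fun q => ?_
  obtain ⟨α, rfl⟩ := QuotientGroup.mk_surjective q
  rw [← QuotientGroup.mk_pow, QuotientGroup.eq_one_iff, Subgroup.mem_subgroupOf]
  exact pow_mem_B2 α.1 α.2 _ d Monoid.exponent_ne_zero_of_finite Monoid.pow_exponent_eq_one hd
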